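/- Let Y be a finite nonempty type, let P, p, q : Y → ℝ be probability mass functions on Y, let α ≥ 0 and η ≥ 0 be real constants, and let z ∈ Y satisfy p z > 0. Fix ŷ_p, ŷ_q ∈ Y with p ŷ_p = max_{y} p y and q ŷ_q = max_{y} q y, and define the 0–1 losses ℓp y = (if y = ŷ_p then 0 else 1) and ℓq y = (if y = ŷ_q then 0 else 1). Write A = ∑_{y} P y · ℓq y, B = ∑_{y} P y · ℓp y, D = (1/2) · ∑_{y} |p y − q y|, R = q z / p z, and define the Lagrangian deferral risk L : {0,1} → ℝ by L r = r · (B + α · D) + (1 − r) · (A + η · R). Define the plug-in rejection rule r̂ by r̂ = 1 if max_{y} q y < max_{y} p y − α · D + η · R and r̂ = 0 otherwise. Then L r̂ − min_{r ∈ {0,1}} L r ≤ max_{y} |P y − q y| + max_{y} |P y − p y|. -/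

import Mathlib

/-!
The expected 0–1 loss of a prediction `a` is `1 - P a`, so with maximizers `yp`, `yq` of `p`, `q`,
the risk difference is `L 1 - L 0 = P yq - (P yp - α D + η R)`. The plug-in rule looks at the sign
of the same expression with `P yq`, `P yp` replaced by `q yq`, `p yp`. Hence, whenever it picks
the worse decision, the regret `|L 1 - L 0|` is at most `|P yq - q yq| + |P yp - p yp|`, and each
term is bounded by the corresponding maximum over `Y`.
-/

theorem expected_zero_one_loss {Y : Type*} [Fintype Y] [DecidableEq Y]
    (P : Y → ℝ) (hP1 : ∑ y, P y = 1) (a : Y) :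
    ∑ y, P y * (if y = a then (0 : ℝ) else 1) = 1 - P a := by
  have h : ∀ y, P y * (if y = a then (0 : ℝ) else 1) = P y - (if y = a then P y else 0) := by
    intro y
    split_ifs <;> simp
  simp [h, Finset.sum_sub_distrib, hP1]

/-- Regret bound for the plug-in rejection rule under 0–1 losses:
`L r̂ − min_{r ∈ {0,1}} L r ≤ max_y |P y − q y| + max_y |P y − p y|`. -/
theorem plugin_rule_regret_bound {Y : Type*} [Fintype Y] [Nonempty Y] [DecidableEq Y]
    (P p q : Y → ℝ) (α η : ℝ)
    (hP0 : ∀ y, 0 ≤ P y) (hP1 : ∑ y, P y = 1)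
    (hp0 : ∀ y, 0 ≤ p y) (hp1 : ∑ y, p y = 1)
    (hq0 : ∀ y, 0 ≤ q y) (hq1 : ∑ y, q y = 1)
    (hα : 0 ≤ α) (hη : 0 ≤ η) (z : Y) (hpz : 0 < p z)
    (yp yq : Y)
    (hyp : p yp = Finset.univ.sup' Finset.univ_nonempty p)
    (hyq : q yq = Finset.univ.sup' Finset.univ_nonempty q) :
    let ℓp : Y → ℝ := fun y => if y = yp then 0 else 1
    let ℓq : Y → ℝ := fun y => if y = yq then 0 else 1
    let A : ℝ := ∑ y, P y * ℓq y
    let B : ℝ := ∑ y, P y * ℓp y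
    let D : ℝ := (1 / 2) * ∑ y, |p y - q y|
    let R : ℝ := q z / p z
    let L : ℝ → ℝ := fun r => r * (B + α * D) + (1 - r) * (A + η * R)
    let rhat : ℝ :=
      if Finset.univ.sup' Finset.univ_nonempty q <
          Finset.univ.sup' Finset.univ_nonempty p - α * D + η * R then 1 else 0
    L rhat - min (L 0) (L 1) ≤
      Finset.univ.sup' Finset.univ_nonempty (fun y => |P y - q y|) +
        Finset.univ.sup' Finset.univ_nonempty (fun y => |P y - p y|) := by
  intro ℓp ℓq A B D R L rhat
  have hA : A = 1 - P yq := expected_zero_one_loss P hP1 yq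
  have hB : B = 1 - P yp := expected_zero_one_loss P hP1 yp
  have hL0 : L 0 = A + η * R := by simp [L]
  have hL1 : L 1 = B + α * D := by simp [L]
  have hq := Finset.le_sup' (fun y => |P y - q y|) (Finset.mem_univ yq)
  have hp := Finset.le_sup' (fun y => |P y - p y|) (Finset.mem_univ yp)
  have hq' := abs_le.1 hq
  have hp' := abs_le.1 hp
  have hq_nonneg := (abs_nonneg _).trans hq
  have hp_nonneg := (abs_nonneg _).trans hp
  by_cases h : Finset.univ.sup' Finset.univ_nonempty q <
      Finset.univ.sup' Finset.univ_nonempty p - α * D + η * R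
  · have hr : rhat = 1 := if_pos h
    rw [← hyp, ← hyq] at h
    rw [hr]
    rcases min_choice (L 0) (L 1) with hm | hm <;> rw [hm] <;> linarith
  · have hr : rhat = 0 := if_neg h
    rw [← hyp, ← hyq] at h
    rw [hr]
    rcases min_choice (L 0) (L 1) with hm | hm <;> rw [hm] <;> linarith
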